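/- The group of the 8 symmetries of the square board (generated by a quarter-turn rotation and a reflection, acting on Fin 8 × Fin 8) acts freely on the set of open knight's tour diagrams of the 8×8 chessboard: no nonidentity board symmetry maps an open tour diagram to itself. Consequently the number T of open tour diagrams equals 8 times the number G of geometrically distinct open tours (orbits under this action), T = 8·G. -/

import Mathlib

/-- The 8×8 chessboard: the set of squares. -/
abbrev Board := Fin 8 × Fin 8

/-- Two squares are related by a knight's move if the multiset of coordinate
distances is `{1, 2}`. -/
def knightMove (p q : Board) : Prop :=
  ({((p.1 : ℤ) - (q.1 : ℤ)).natAbs, ((p.2 : ℤ) - (q.2 : ℤ)).natAbs} : Finset ℕ) =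
    ({1, 2} : Finset ℕ)

/-- An open knight's tour numbering: a sequence of all 64 squares, each appearing
exactly once, with consecutive squares a knight's move apart (a directed
Hamiltonian path of the knight's graph). -/
def IsOpenTourNumbering (f : Fin 64 → Board) : Prop :=
  Function.Bijective f ∧ ∀ i : Fin 63, knightMove (f i.castSucc) (f i.succ)

/-- The underlying (undirected) edge set of a tour numbering: its diagram. -/
def tourEdges (f : Fin 64 → Board) : Finset (Sym2 Board) :=
  Finset.image (fun i : Fin 63 => s(f i.castSucc, f i.succ)) Finset.univ

/-- An open tour diagram: an undirected Hamiltonian path of the knight's graph,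
identified with the edge set of some open tour numbering. -/
def IsOpenTourDiagram (E : Finset (Sym2 Board)) : Prop :=
  ∃ f, IsOpenTourNumbering f ∧ tourEdges f = E

/-- Quarter-turn rotation of the board: `(a, b) ↦ (b, 7 - a)`. -/
def rotQuarter : Equiv.Perm Board :=
  (Equiv.prodComm (Fin 8) (Fin 8)).trans (Equiv.prodCongr (Equiv.refl (Fin 8)) Fin.revPerm)

/-- A reflection of the board: `(a, b) ↦ (7 - a, b)`. -/
def reflectBoard : Equiv.Perm Board :=
  Equiv.prodCongr Fin.revPerm (Equiv.refl (Fin 8))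

/-- The 8 symmetries of the square board: the (dihedral) group generated by the
quarter-turn rotation and a reflection. -/
def boardSymmetries : Subgroup (Equiv.Perm Board) :=
  Subgroup.closure {rotQuarter, reflectBoard}

/-- Action of a board permutation on an edge set. -/
def mapEdges (g : Equiv.Perm Board) (E : Finset (Sym2 Board)) : Finset (Sym2 Board) :=
  E.image (Sym2.map g)

/-- Two open tour diagrams are geometrically equivalent if a board symmetry maps
one to the other. -/
def geomEquiv (E E' : {E : Finset (Sym2 Board) // IsOpenTourDiagram E}) : Prop :=
  ∃ g ∈ boardSymmetries, mapEdges g E.1 = E'.1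

/-! A symmetry fixing a diagram permutes the edges of a Hamiltonian path, so it either fixes every
square or reverses the path. A path on 64 squares has a middle edge, and a reversing symmetry swaps
its two ends, which are a knight's move apart. But no symmetry `g` swaps two such squares: if `g`
keeps the axes, then each coordinate changes by `0` or by an odd amount, never by `2`; if `g`
exchanges the axes and swaps two squares, then both coordinates change by the same amount. -/

section Path

open SimpleGraph

theorem strictMono_of_hasse_adj {α : Type*} [LinearOrder α] {n : ℕ} {u : Fin (n + 2) → α}
    (hu : Function.Injective u) (hadj : ∀ i : Fin (n + 1), (hasse α).Adj (u i.castSucc) (u i.succ))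
    (h : u 0 < u 1) : StrictMono u := by
  refine Fin.strictMono_iff_lt_succ.2 fun i => ?_
  induction i using Fin.induction with
  | zero => exact h
  | succ i ih =>
    have hup : u i.castSucc.castSucc ⋖ u i.castSucc.succ :=
      (hadj i.castSucc).resolve_right fun hdown => ih.not_gt hdown.lt
    refine ((hadj i.succ).resolve_right fun hdown => ?_).lt
    have hback : i.castSucc.castSucc = i.succ.succ := hu (hup.unique_left hdown)
    simp only [Fin.ext_iff, Fin.val_castSucc, Fin.val_succ] at hback
    omega

theorem strictMono_or_strictAnti_of_hasse_adj {α : Type*} [LinearOrder α] {n : ℕ}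
    {u : Fin (n + 1) → α} (hu : Function.Injective u)
    (hadj : ∀ i : Fin n, (hasse α).Adj (u i.castSucc) (u i.succ)) :
    StrictMono u ∨ StrictAnti u := by
  cases n with
  | zero => exact .inl (Subsingleton.strictMono (α := Fin 1) u)
  | succ n =>
    rcases (hu.ne (Fin.zero_ne_one (n := n))).lt_or_gt with h | h
    · exact .inl (strictMono_of_hasse_adj hu hadj h)
    · have hdual : StrictMono (OrderDual.toDual ∘ u) :=
        strictMono_of_hasse_adj (OrderDual.toDual.injective.comp hu)
          (fun i => (hadj i).symm.imp CovBy.toDual CovBy.toDual) h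
      exact .inr hdual

theorem eq_id_or_eq_rev_of_pathGraph_adj {n : ℕ} {u : Fin (n + 1) → Fin (n + 1)}
    (hu : Function.Injective u)
    (hadj : ∀ i : Fin n, (pathGraph (n + 1)).Adj (u i.castSucc) (u i.succ)) :
    u = id ∨ u = Fin.rev := by
  refine (strictMono_or_strictAnti_of_hasse_adj hu hadj).imp StrictMono.eq_id fun hanti => ?_
  have hrev : Fin.rev ∘ u = id := (Fin.rev_strictAnti.comp hanti).eq_id
  exact funext fun i => Fin.rev_eq_iff.1 (congrFun hrev i)

theorem eq_or_eq_comp_rev_of_edges_subset {V : Type*} [DecidableEq V] {n : ℕ}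
    {f f' : Fin (n + 1) → V} (hf : Function.Bijective f) (hf' : Function.Injective f')
    (h : Finset.univ.image (fun i : Fin n => s(f' i.castSucc, f' i.succ)) ⊆
      Finset.univ.image (fun i : Fin n => s(f i.castSucc, f i.succ))) :
    f' = f ∨ f' = f ∘ Fin.rev := by
  obtain ⟨u, rfl⟩ : ∃ u, f ∘ u = f' := hf.surjective.comp_left f'
  have hadj (i : Fin n) : (pathGraph (n + 1)).Adj (u i.castSucc) (u i.succ) := by
    obtain ⟨j, -, hj⟩ := Finset.mem_image.1 (h (Finset.mem_image_of_mem _ (Finset.mem_univ i)))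
    rw [pathGraph_adj]
    rcases Sym2.eq_iff.1 hj with ⟨hfst, hsnd⟩ | ⟨hfst, hsnd⟩
    · simp [← hf.injective hfst, ← hf.injective hsnd]
    · simp [← hf.injective hfst, ← hf.injective hsnd]
  exact (eq_id_or_eq_rev_of_pathGraph_adj hf'.of_comp hadj).imp (congrArg (f ∘ ·))
    (congrArg (f ∘ ·))

end Path

section FlipCoord

variable {n : ℕ}

/-- The identity (`a = false`) or the reversal (`a = true`) of a board coordinate. -/
def flipCoord (a : Bool) : Equiv.Perm (Fin n) :=
  if a then Fin.revPerm else 1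

theorem flipCoord_flipCoord (a b : Bool) (x : Fin n) :
    flipCoord a (flipCoord b x) = flipCoord (a ^^ b) x := by
  cases a <;> cases b <;> simp [flipCoord]

theorem natAbs_flipCoord_sub_flipCoord (a : Bool) (x y : Fin n) :
    ((flipCoord a x : ℤ) - (flipCoord a y : ℤ)).natAbs = ((x : ℤ) - (y : ℤ)).natAbs := by
  cases a
  · rfl
  · simp only [flipCoord, if_true, Fin.revPerm_apply, Fin.val_rev]
    omega

theorem natAbs_sub_flipCoord_ne_two (hn : Even n) (a : Bool) (x : Fin n) :
    ((x : ℤ) - (flipCoord a x : ℤ)).natAbs ≠ 2 := by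
  obtain ⟨k, rfl⟩ := hn
  cases a
  · simp [flipCoord]
  · simp only [flipCoord, if_true, Fin.revPerm_apply, Fin.val_rev]
    omega

theorem flipCoord_eq_self_iff (hn : Even n) {a : Bool} {x : Fin n} :
    flipCoord a x = x ↔ a = false := by
  obtain ⟨k, rfl⟩ := hn
  cases a
  · simp [flipCoord]
  · simp only [flipCoord, if_true, Fin.revPerm_apply, Fin.ext_iff, Fin.val_rev, reduceCtorEq,
      iff_false]
    omega

end FlipCoord

section SquareSymm

variable {n : ℕ}

/-- The symmetries of the `n × n` board in coordinates: exchange the axes if `c`, then reverse the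
first coordinate if `a` and the second one if `b`. -/
def squareSymm (a b c : Bool) : Equiv.Perm (Fin n × Fin n) :=
  (if c then Equiv.prodComm _ _ else Equiv.refl _).trans
    (Equiv.prodCongr (flipCoord a) (flipCoord b))

theorem squareSymm_false_apply (a b : Bool) (p : Fin n × Fin n) :
    squareSymm a b false p = (flipCoord a p.1, flipCoord b p.2) := rfl

theorem squareSymm_true_apply (a b : Bool) (p : Fin n × Fin n) :
    squareSymm a b true p = (flipCoord a p.2, flipCoord b p.1) := rfl

theorem squareSymm_one : squareSymm false false false = (1 : Equiv.Perm (Fin n × Fin n)) := rfl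

theorem squareSymm_mul (a b c a' b' c' : Bool) :
    (squareSymm a b c * squareSymm a' b' c' : Equiv.Perm (Fin n × Fin n)) =
      squareSymm (a ^^ bif c then b' else a') (b ^^ bif c then a' else b') (c ^^ c') := by
  ext p : 1
  cases c <;> cases c' <;>
    simp [squareSymm_false_apply, squareSymm_true_apply, flipCoord_flipCoord]

theorem squareSymm_inv (a b c : Bool) :
    (squareSymm a b c : Equiv.Perm (Fin n × Fin n))⁻¹ =
      squareSymm (bif c then b else a) (bif c then a else b) c := by
  rw [inv_eq_iff_mul_eq_one, squareSymm_mul, ← squareSymm_one]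
  cases c <;> simp

end SquareSymm

theorem rotQuarter_eq_squareSymm : rotQuarter = squareSymm false true true := rfl

theorem reflectBoard_eq_squareSymm : reflectBoard = squareSymm true false false := rfl

theorem exists_eq_squareSymm {g : Equiv.Perm Board} (hg : g ∈ boardSymmetries) :
    ∃ a b c, g = squareSymm a b c := by
  induction hg using Subgroup.closure_induction with
  | mem x hx =>
    rcases hx with rfl | rfl
    · exact ⟨_, _, _, rotQuarter_eq_squareSymm⟩
    · exact ⟨_, _, _, reflectBoard_eq_squareSymm⟩
  | one => exact ⟨_, _, _, squareSymm_one.symm⟩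
  | mul x y _ _ hx hy =>
    obtain ⟨a, b, c, rfl⟩ := hx
    obtain ⟨a', b', c', rfl⟩ := hy
    exact ⟨_, _, _, squareSymm_mul ..⟩
  | inv x _ hx =>
    obtain ⟨a, b, c, rfl⟩ := hx
    exact ⟨_, _, _, squareSymm_inv ..⟩

theorem squareSymm_mem_boardSymmetries (a b c : Bool) : squareSymm a b c ∈ boardSymmetries := by
  have hrot : squareSymm false true true ∈ boardSymmetries :=
    Subgroup.subset_closure (.inl rotQuarter_eq_squareSymm.symm)
  have hfst : squareSymm true false false ∈ boardSymmetries :=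
    Subgroup.subset_closure (.inr reflectBoard_eq_squareSymm.symm)
  have hswap : squareSymm false false true ∈ boardSymmetries := by
    simpa [squareSymm_mul] using mul_mem hrot hfst
  have hsnd : squareSymm false true false ∈ boardSymmetries := by
    simpa [squareSymm_mul] using mul_mem hrot hswap
  have hfactor : squareSymm (n := 8) a b c =
      squareSymm a false false * squareSymm false b false * squareSymm false false c := by
    simp [squareSymm_mul]
  rw [hfactor]
  refine mul_mem (mul_mem ?_ ?_) ?_
  · cases a; exacts [one_mem _, hfst]
  · cases b; exacts [one_mem _, hsnd]
  · cases c; exacts [one_mem _, hswap]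

theorem squareSymm_injective :
    Function.Injective fun t : Bool × Bool × Bool => squareSymm (n := 8) t.1 t.2.1 t.2.2 := by
  have hdistinct : Function.Injective fun t : Bool × Bool × Bool =>
      squareSymm (n := 8) t.1 t.2.1 t.2.2 (0, 1) := by decide
  exact hdistinct.of_comp (f := fun g : Equiv.Perm Board => g (0, 1))

theorem card_boardSymmetries : Nat.card boardSymmetries = 8 := by
  have hrange : (boardSymmetries : Set (Equiv.Perm Board)) =
      Set.range fun t : Bool × Bool × Bool => squareSymm t.1 t.2.1 t.2.2 := by
    ext g
    constructor
    · intro hg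
      obtain ⟨a, b, c, rfl⟩ := exists_eq_squareSymm hg
      exact ⟨(a, b, c), rfl⟩
    · rintro ⟨t, rfl⟩
      exact squareSymm_mem_boardSymmetries t.1 t.2.1 t.2.2
  calc Nat.card boardSymmetries = Nat.card (Bool × Bool × Bool) := by
        rw [← SetLike.coe_sort_coe, hrange, Nat.card_range_of_injective squareSymm_injective]
    _ = 8 := by simp

theorem knightMove_apply {g : Equiv.Perm Board} (hg : g ∈ boardSymmetries) {p q : Board}
    (h : knightMove p q) : knightMove (g p) (g q) := by
  obtain ⟨a, b, c, rfl⟩ := exists_eq_squareSymm hg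
  cases c
  · simpa only [knightMove, squareSymm_false_apply, natAbs_flipCoord_sub_flipCoord] using h
  · simpa only [knightMove, squareSymm_true_apply, natAbs_flipCoord_sub_flipCoord,
      Finset.pair_comm] using h

theorem not_knightMove_squareSymm_false (a b : Bool) (p : Board) :
    ¬ knightMove p (squareSymm a b false p) := by
  intro h
  have htwo : 2 ∈ ({1, 2} : Finset ℕ) := by simp
  rw [knightMove, squareSymm_false_apply] at h
  rw [← h, Finset.mem_insert, Finset.mem_singleton] at htwo
  rcases htwo with htwo | htwo
  · exact natAbs_sub_flipCoord_ne_two (by decide) a p.1 htwo.symm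
  · exact natAbs_sub_flipCoord_ne_two (by decide) b p.2 htwo.symm

theorem not_knightMove_squareSymm_true {a b : Bool} {p : Board}
    (hp : squareSymm a b true (squareSymm a b true p) = p) :
    ¬ knightMove p (squareSymm a b true p) := by
  intro h
  simp only [knightMove, squareSymm_true_apply, flipCoord_flipCoord] at hp h
  obtain rfl : a = b := by
    simpa using (flipCoord_eq_self_iff (by decide)).1 (congrArg Prod.fst hp)
  have hdist : ((p.2 : ℤ) - (flipCoord a p.1 : ℤ)).natAbs =
      ((p.1 : ℤ) - (flipCoord a p.2 : ℤ)).natAbs := by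
    have hinv : flipCoord a (flipCoord a p.1) = p.1 := by
      rw [flipCoord_flipCoord, Bool.xor_self, flipCoord_eq_self_iff (by decide)]
    rw [← natAbs_flipCoord_sub_flipCoord a, hinv, ← Int.natAbs_neg, neg_sub]
  have hcard := congrArg Finset.card h
  simp [hdist] at hcard

theorem not_knightMove_of_apply_apply_eq {g : Equiv.Perm Board} (hg : g ∈ boardSymmetries)
    {p : Board} (hp : g (g p) = p) : ¬ knightMove p (g p) := by
  obtain ⟨a, b, c, rfl⟩ := exists_eq_squareSymm hg
  cases c
  · exact not_knightMove_squareSymm_false a b p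
  · exact not_knightMove_squareSymm_true hp

theorem mapEdges_one (E : Finset (Sym2 Board)) : mapEdges 1 E = E := by
  simp [mapEdges]

theorem mapEdges_mul (g g' : Equiv.Perm Board) (E : Finset (Sym2 Board)) :
    mapEdges (g * g') E = mapEdges g (mapEdges g' E) := by
  simp [mapEdges, Finset.image_image, Sym2.map_comp]

theorem mapEdges_tourEdges (g : Equiv.Perm Board) (f : Fin 64 → Board) :
    mapEdges g (tourEdges f) = tourEdges (g ∘ f) := by
  simp only [mapEdges, tourEdges, Finset.image_image]
  rfl

theorem eq_one_of_mapEdges_eq_self {g : Equiv.Perm Board} (hg : g ∈ boardSymmetries)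
    {E : Finset (Sym2 Board)} (hE : IsOpenTourDiagram E) (h : mapEdges g E = E) : g = 1 := by
  obtain ⟨f, ⟨hf, hknight⟩, rfl⟩ := hE
  rw [mapEdges_tourEdges] at h
  rcases eq_or_eq_comp_rev_of_edges_subset hf (g.injective.comp hf.injective) h.subset
    with hfix | hrev
  · exact Equiv.ext (hf.surjective.forall.2 (congrFun hfix))
  · have hg31 : g (f 31) = f 32 := congrFun hrev 31
    have hg32 : g (f 32) = f 31 := congrFun hrev 32
    have hmiddle : knightMove (f 31) (g (f 31)) := hg31 ▸ hknight 31
    exact absurd hmiddle (not_knightMove_of_apply_apply_eq hg (by rw [hg31, hg32]))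

theorem IsOpenTourDiagram.mapEdges {g : Equiv.Perm Board} (hg : g ∈ boardSymmetries)
    {E : Finset (Sym2 Board)} (hE : IsOpenTourDiagram E) : IsOpenTourDiagram (mapEdges g E) := by
  obtain ⟨f, ⟨hf, hknight⟩, rfl⟩ := hE
  exact ⟨g ∘ f, ⟨g.bijective.comp hf, fun i => knightMove_apply hg (hknight i)⟩,
    (mapEdges_tourEdges g f).symm⟩

/-- Board symmetries act on open tour diagrams through `mapEdges`; the orbits are the classes of
`geomEquiv`. -/
instance : MulAction boardSymmetries {E : Finset (Sym2 Board) // IsOpenTourDiagram E} where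
  smul g E := ⟨mapEdges g E, E.2.mapEdges g.2⟩
  one_smul E := Subtype.ext (mapEdges_one E)
  mul_smul g g' E := Subtype.ext (mapEdges_mul g g' E)

theorem stabilizer_openTourDiagram_eq_bot (E : {E : Finset (Sym2 Board) // IsOpenTourDiagram E}) :
    MulAction.stabilizer boardSymmetries E = ⊥ :=
  (Subgroup.eq_bot_iff_forall _).2 fun g hg =>
    Subtype.ext (eq_one_of_mapEdges_eq_self g.2 E.2 (congrArg Subtype.val hg))

theorem orbitRel_iff_geomEquiv (E E' : {E : Finset (Sym2 Board) // IsOpenTourDiagram E}) :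
    MulAction.orbitRel boardSymmetries _ E E' ↔ geomEquiv E E' := by
  rw [MulAction.orbitRel_apply, MulAction.mem_orbit_symm]
  constructor
  · rintro ⟨g, hg⟩
    exact ⟨g, g.2, congrArg Subtype.val hg⟩
  · rintro ⟨g, hg, h⟩
    exact ⟨⟨g, hg⟩, Subtype.ext h⟩

/-- The 8 board symmetries act freely on open tour diagrams (no
nonidentity symmetry fixes a diagram), and hence `T = 8 · G` where `G` is the
number of orbits (geometrically distinct open tours). -/
theorem board_symmetries_act_freely_and_T_eq_eight_G :
    (∀ g ∈ boardSymmetries, ∀ E : Finset (Sym2 Board), IsOpenTourDiagram E →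
      mapEdges g E = E → g = 1) ∧
    Nat.card {E : Finset (Sym2 Board) // IsOpenTourDiagram E} =
      8 * Nat.card (Quot geomEquiv) := by
  refine ⟨fun g hg E hE => eq_one_of_mapEdges_eq_self hg hE, ?_⟩
  calc Nat.card {E : Finset (Sym2 Board) // IsOpenTourDiagram E}
      = Nat.card (MulAction.orbitRel.Quotient boardSymmetries
          {E : Finset (Sym2 Board) // IsOpenTourDiagram E}) * Nat.card boardSymmetries := by
        rw [← Nat.card_prod]
        exact Nat.card_congr
          (MulAction.selfEquivOrbitsQuotientProd stabilizer_openTourDiagram_eq_bot)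
    _ = Nat.card (Quot geomEquiv) * 8 :=
        congrArg₂ (· * ·) (Nat.card_congr (Quot.congrRight orbitRel_iff_geomEquiv))
          card_boardSymmetries
    _ = 8 * Nat.card (Quot geomEquiv) := mul_comm _ _
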